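/- For every integer k ≥ 0 and for Lebesgue-almost every x ∈ (0,1) (such x is irrational, with continued fraction coefficients a_j = a_j(x)), the three averages (1/n) Σ_{j=1}^n log(a_j + k), (1/n) Σ_{j=1}^n log(a_{2j} + k) and (1/n) Σ_{j=1}^n log(a_{2j-1} + k) all converge to log K_k as n → ∞. -/

import Mathlib

open Filter Finset MeasureTheory

/-- `qden a n` is the denominator `q_n` of the continued fraction with partial
quotients `a_1 = a 0, a_2 = a 1, …` (0-indexed sequence `a`), defined by
`q_0 = 1`, `q_1 = a_1`, `q_n = a_n q_{n-1} + q_{n-2}`. -/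
def qden (a : ℕ → ℕ+) : ℕ → ℕ
  | 0 => 1
  | 1 => a 0
  | (n+2) => (a (n+1) : ℕ) * qden a (n+1) + qden a n

/-- `pnum a n` is the numerator `p_n`, defined by `p_0 = 0`, `p_1 = 1`,
`p_n = a_n p_{n-1} + p_{n-2}`. -/
def pnum (a : ℕ → ℕ+) : ℕ → ℕ
  | 0 => 0
  | 1 => 1
  | (n+2) => (a (n+1) : ℕ) * pnum a (n+1) + pnum a n

/-- The value `[a_1, a_2, …]` of the infinite continued fraction with partial quotients
`a_1 = a 0, a_2 = a 1, …`, i.e. the limit of the convergents `p_n / q_n` (which always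
exists). -/
noncomputable def cfVal (a : ℕ → ℕ+) : ℝ :=
  limUnder atTop (fun n => (pnum a n : ℝ) / (qden a n : ℝ))

/-- The Khintchine-type constant `K_k = ∏_{j=1}^∞ (1 + 1/(j(j+2)))^{log(j+k)/log 2}`. -/
noncomputable def Kconst (k : ℕ) : ℝ :=
  ∏' j : ℕ, (1 + 1 / (((j:ℝ)+1) * ((j:ℝ)+3))) ^ (Real.log ((j:ℝ)+1+(k:ℝ)) / Real.log 2)

open scoped ProbabilityTheory ENNReal Topology NNReal

/-!
The digit `a_{n+1}(x)` is a function of `T^n x`, where `T` is the Gauss map, which preserves the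
Gauss measure `dx / ((1 + x) log 2)`. Its transfer operator averages a function over the inverse
branches `y ↦ 1 / (j + 1 + y)` with the weights `(1 + y) / ((j + 1 + y) (j + 2 + y))`, and an
explicit estimate of these weights shows that it multiplies Lipschitz constants by at most
`11 / 12`. An observable `f(a_1)` of the first digit is unbounded, but its image under the transfer
operator is Lipschitz as soon as `∑ f(n) / n ^ 2` converges. Hence, if also `∑ f(n) ^ 2 / n ^ 2`
converges, the correlations of `f(a_1)` and `f(a_{n+1})` decay exponentially, and the sums of
`f(a_i)` over any `n` distinct indices have variance `O(n)`. By Chebyshev and Borel–Cantelli their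
averages converge almost surely along the squares, and since `f ≥ 0` monotonicity fills the gaps.
As the estimate ignores which indices are summed, the even and odd digits need no separate argument.
-/

section StrongLaw

open ProbabilityTheory

theorem tendsto_div_of_monotone_of_tendsto_div_sq {u : ℕ → ℝ} {l : ℝ} (hu : Monotone u)
    (h : Tendsto (fun n : ℕ => u ((n + 1) ^ 2) / ((n + 1) ^ 2 : ℕ)) atTop (𝓝 l)) :
    Tendsto (fun n : ℕ => u n / n) atTop (𝓝 l) := by
  refine tendsto_div_of_monotone_of_exists_subseq_tendsto_div u l hu fun a ha =>
    ⟨fun n => (n + 1) ^ 2, ?_, ?_, h⟩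
  · have hratio : Tendsto (fun n : ℕ => (1 + 1 / ((n : ℝ) + 1)) ^ 2) atTop (𝓝 1) := by
      simpa using (tendsto_one_div_add_atTop_nhds_zero_nat.const_add (1 : ℝ)).pow 2
    filter_upwards [hratio.eventually_le_const ha] with n hn
    calc (((n + 1 + 1) ^ 2 : ℕ) : ℝ)
        = (1 + 1 / ((n : ℝ) + 1)) ^ 2 * ((n + 1) ^ 2 : ℕ) := by push_cast; field_simp
      _ ≤ a * ((n + 1) ^ 2 : ℕ) := by gcongr
  · exact (tendsto_pow_atTop two_ne_zero).comp (tendsto_add_atTop_nat 1)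

variable {Ω : Type*} [MeasurableSpace Ω] {μ : Measure Ω}

theorem ae_tendsto_zero_of_summable_integral_sq {Y : ℕ → Ω → ℝ} (hY : ∀ n, MemLp (Y n) 2 μ)
    (hsum : Summable fun n => ∫ ω, Y n ω ^ 2 ∂μ) :
    ∀ᵐ ω ∂μ, Tendsto (Y · ω) atTop (𝓝 0) := by
  have hnorm (n : ℕ) : eLpNorm (fun ω => Y n ω ^ 2) 1 μ = ENNReal.ofReal (∫ ω, Y n ω ^ 2 ∂μ) := by
    rw [eLpNorm_one_eq_lintegral_enorm, ← ofReal_integral_norm_eq_lintegral_enorm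
      (hY n).integrable_sq]
    simp
  have hfin : ∑' n, eLpNorm (fun ω => Y n ω ^ 2) 1 μ ≠ ∞ := by
    simp_rw [hnorm]
    exact hsum.tsum_ofReal_ne_top
  filter_upwards [summable_norm_of_tsum_eLpNorm_ne_top le_rfl
    (fun n => (hY n).integrable_sq.aestronglyMeasurable) hfin] with ω hω
  have hsq := hω.tendsto_atTop_zero
  simpa [Real.sqrt_sq_eq_abs, tendsto_zero_iff_abs_tendsto_zero (Y · ω), Function.comp_def] using
    hsq.sqrt

variable [IsProbabilityMeasure μ] {Z : ℕ → Ω → ℝ}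

theorem variance_sum_range_le (hZ : ∀ i, MemLp (Z i) 2 μ) {v : ℝ} (hv : ∀ i, Var[Z i; μ] ≤ v)
    {r : ℕ → ℝ} (hr0 : ∀ n, 0 ≤ r n) (hr : Summable r)
    (hcov : ∀ i n, cov[Z i, Z (i + n + 1); μ] ≤ r n) (N : ℕ) :
    Var[∑ i ∈ range N, Z i; μ] ≤ N * (v + 2 * ∑' n, r n) := by
  induction N with
  | zero => simp [variance_zero]
  | succ N ih =>
    have hcovN : cov[∑ i ∈ range N, Z i, Z N; μ] ≤ ∑' n, r n := calc
      _ = ∑ i ∈ range N, cov[Z i, Z N; μ] := covariance_sum_left' (fun i _ => hZ i) (hZ N)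
      _ ≤ ∑ i ∈ range N, r (N - 1 - i) := by
        refine sum_le_sum fun i hi => ?_
        have hlt := mem_range.1 hi
        simpa [show i + (N - 1 - i) + 1 = N by omega] using hcov i (N - 1 - i)
      _ = ∑ n ∈ range N, r n := sum_range_reflect r N
      _ ≤ ∑' n, r n := hr.sum_le_tsum _ fun n _ => hr0 n
    rw [sum_range_succ, variance_add (memLp_finsetSum' _ fun i _ => hZ i) (hZ N)]
    push_cast
    linarith [hv N]

theorem ae_tendsto_sum_range_sq_div (hZ : ∀ i, MemLp (Z i) 2 μ) {m : ℝ} (hm : ∀ i, μ[Z i] = m)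
    {C : ℝ} (hvar : ∀ n : ℕ, Var[∑ i ∈ range n, Z i; μ] ≤ n * C) :
    ∀ᵐ ω ∂μ, Tendsto (fun n : ℕ => (∑ i ∈ range ((n + 1) ^ 2), Z i ω) / ((n + 1) ^ 2 : ℕ))
      atTop (𝓝 m) := by
  set S : ℕ → Ω → ℝ := fun n => ∑ i ∈ range n, Z i with hS
  have hSmem (n : ℕ) : MemLp (S n) 2 μ := memLp_finsetSum' _ fun i _ => hZ i
  have hSmean (n : ℕ) : μ[S n] = n * m := by
    simp_rw [hS, Finset.sum_apply]
    rw [integral_finsetSum _ fun i _ => (hZ i).integrable one_le_two]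
    simp [hm]
  set Y : ℕ → Ω → ℝ := fun n ω => (S ((n + 1) ^ 2) ω - μ[S ((n + 1) ^ 2)]) / ((n + 1) ^ 2 : ℕ)
    with hY
  have hYsq (n : ℕ) : ∫ ω, Y n ω ^ 2 ∂μ ≤ C * (1 / ((n : ℝ) + 1) ^ 2) := by
    simp_rw [hY, div_pow]
    rw [integral_div, ← variance_eq_integral (hSmem _).aestronglyMeasurable.aemeasurable,
      div_le_iff₀ (by positivity)]
    refine (hvar _).trans_eq ?_
    push_cast
    field_simp
  have hsq : Summable fun n : ℕ => 1 / ((n : ℝ) + 1) ^ 2 := by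
    exact_mod_cast (summable_nat_add_iff 1).2 (Real.summable_one_div_nat_pow.2 one_lt_two)
  have hYsum : Summable fun n => ∫ ω, Y n ω ^ 2 ∂μ :=
    .of_nonneg_of_le (fun n => integral_nonneg fun ω => sq_nonneg _) hYsq (hsq.mul_left C)
  have hYmem (n : ℕ) : MemLp (Y n) 2 μ := by
    simp_rw [hY, div_eq_mul_inv]
    exact ((hSmem _).sub (memLp_const _)).mul_const _
  filter_upwards [ae_tendsto_zero_of_summable_integral_sq hYmem hYsum] with ω hω
  refine (by simpa using hω.add_const m : Tendsto _ atTop (𝓝 m)).congr fun n => ?_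
  simp only [hY, hSmean]
  rw [← Finset.sum_apply]
  field_simp
  ring

theorem ae_tendsto_sum_range_div_of_covariance_le (hZ0 : ∀ i ω, 0 ≤ Z i ω)
    (hZ : ∀ i, MemLp (Z i) 2 μ) {m : ℝ} (hm : ∀ i, μ[Z i] = m) {v : ℝ}
    (hv : ∀ i, Var[Z i; μ] ≤ v) {r : ℕ → ℝ} (hr0 : ∀ n, 0 ≤ r n) (hr : Summable r)
    (hcov : ∀ i n, cov[Z i, Z (i + n + 1); μ] ≤ r n) :
    ∀ᵐ ω ∂μ, Tendsto (fun n : ℕ => (∑ i ∈ range n, Z i ω) / n) atTop (𝓝 m) := by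
  filter_upwards [ae_tendsto_sum_range_sq_div hZ hm (variance_sum_range_le hZ hv hr0 hr hcov)]
    with ω hω
  exact tendsto_div_of_monotone_of_tendsto_div_sq
    (monotone_nat_of_le_succ fun n => by simpa [sum_range_succ] using hZ0 n ω) hω

theorem ae_tendsto_sum_range_iterate_div {T : Ω → Ω} (hT : MeasurePreserving T μ μ)
    {F : Ω → ℝ} (hF0 : ∀ ω, 0 ≤ F ω) (hF : MemLp F 2 μ) {r : ℕ → ℝ} (hr_anti : Antitone r)
    (hr0 : ∀ n, 0 ≤ r n) (hr : Summable r) (hcov : ∀ n, cov[F, F ∘ T^[n + 1]; μ] ≤ r n)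
    {φ : ℕ → ℕ} (hφ : StrictMono φ) :
    ∀ᵐ ω ∂μ, Tendsto (fun n : ℕ => (∑ i ∈ range n, F (T^[φ i] ω)) / n) atTop (𝓝 μ[F]) := by
  have hTn (n : ℕ) : MeasurePreserving T^[n] μ μ := hT.iterate n
  have hFn (n : ℕ) : MemLp (F ∘ T^[n]) 2 μ := hF.comp_measurePreserving (hTn n)
  have hmap {X : Ω → ℝ} (hX : AEStronglyMeasurable X μ) (n : ℕ) :
      AEStronglyMeasurable X (μ.map T^[n]) := by rwa [(hTn n).map_eq]
  refine ae_tendsto_sum_range_div_of_covariance_le (Z := fun i => F ∘ T^[φ i]) (v := Var[F; μ])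
    (fun i ω => hF0 _) (fun i => hFn _) (fun i => ?_) (fun i => ?_) hr0 hr fun i n => ?_
  · calc μ[F ∘ T^[φ i]] = ∫ ω, F ω ∂(μ.map T^[φ i]) :=
        (integral_map (hTn _).aemeasurable (hmap hF.aestronglyMeasurable _)).symm
      _ = μ[F] := by rw [(hTn _).map_eq]
  · exact ((hTn (φ i)).variance_fun_comp hF.aestronglyMeasurable.aemeasurable).le
  · obtain ⟨d, hnd, hd⟩ : ∃ d, n ≤ d ∧ φ (i + n + 1) = d + 1 + φ i := by
      have := hφ.add_le_nat (n + 1) i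
      rw [show n + 1 + i = i + n + 1 by omega] at this
      exact ⟨φ (i + n + 1) - φ i - 1, by omega, by omega⟩
    calc cov[F ∘ T^[φ i], F ∘ T^[φ (i + n + 1)]; μ]
        = cov[F ∘ T^[φ i], (F ∘ T^[d + 1]) ∘ T^[φ i]; μ] := by
          rw [hd, Function.iterate_add, Function.comp_assoc]
      _ = cov[F, F ∘ T^[d + 1]; μ.map T^[φ i]] :=
          (covariance_map (hmap hF.aestronglyMeasurable _)
            (hmap (hFn _).aestronglyMeasurable _) (hTn _).aemeasurable).symm
      _ ≤ r d := by rw [(hTn _).map_eq]; exact hcov d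
      _ ≤ r n := hr_anti hnd

end StrongLaw

section GaussMap

/-- The Gauss map `x ↦ {1 / x}`, which acts on continued fractions as the shift
`[a₁, a₂, …] ↦ [a₂, a₃, …]`; at the junk point `0` it takes the value `0`. -/
noncomputable def gaussMap (x : ℝ) : ℝ := Int.fract x⁻¹

/-- The partial quotients of `x ∈ (0, 1)`, indexed from `0` like the sequences in `qden` and
`pnum`: `partialQuotient x n` is the coefficient `a_{n+1}(x)`. The values are meaningful for
irrational `x` only; where the expansion has stopped, `Nat.toPNat'` returns the junk value `1`. -/
noncomputable def partialQuotient (x : ℝ) (n : ℕ) : ℕ+ := ⌊(gaussMap^[n] x)⁻¹⌋₊.toPNat'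

theorem measurable_gaussMap : Measurable gaussMap := measurable_fract.comp measurable_inv

theorem gaussMap_inv_natCast_add (n : ℕ) {y : ℝ} (hy : y ∈ Set.Ico (0 : ℝ) 1) :
    gaussMap (n + y)⁻¹ = y := by
  rw [gaussMap, inv_inv, Int.fract_natCast_add, Int.fract_eq_self.2 hy]

variable {x : ℝ}

theorem irrational_gaussMap_iterate (hx : Irrational x) (n : ℕ) : Irrational (gaussMap^[n] x) := by
  induction n with
  | zero => exact hx
  | succ n ih =>
    rw [Function.iterate_succ_apply']
    exact (irrational_inv_iff.2 ih).sub_intCast _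

theorem gaussMap_iterate_mem_Ioo (hx : Irrational x) (hx01 : x ∈ Set.Ioo (0 : ℝ) 1) (n : ℕ) :
    gaussMap^[n] x ∈ Set.Ioo (0 : ℝ) 1 := by
  cases n with
  | zero => exact hx01
  | succ n =>
    have hne := (irrational_gaussMap_iterate hx (n + 1)).ne_zero
    rw [Function.iterate_succ_apply'] at hne ⊢
    exact ⟨(Int.fract_nonneg _).lt_of_ne' hne, Int.fract_lt_one _⟩

theorem coe_partialQuotient (hx : Irrational x) (hx01 : x ∈ Set.Ioo (0 : ℝ) 1) (n : ℕ) :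
    (partialQuotient x n : ℕ) = ⌊(gaussMap^[n] x)⁻¹⌋₊ := by
  have hmem := gaussMap_iterate_mem_Ioo hx hx01 n
  have hpos : 0 < ⌊(gaussMap^[n] x)⁻¹⌋₊ := Nat.floor_pos.2 ((one_le_inv₀ hmem.1).2 hmem.2.le)
  rw [partialQuotient, Nat.toPNat'_coe, if_pos hpos]

theorem stream_eq_some_gaussMap_iterate (hx : Irrational x) (hx01 : x ∈ Set.Ioo (0 : ℝ) 1)
    (n : ℕ) :
    ∃ p, GenContFract.IntFractPair.stream x n = some p ∧ p.fr = gaussMap^[n] x := by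
  induction n with
  | zero => exact ⟨_, rfl, Int.fract_eq_self.2 ⟨hx01.1.le, hx01.2⟩⟩
  | succ n ih =>
    obtain ⟨p, hp, hfr⟩ := ih
    have hne : p.fr ≠ 0 := hfr ▸ (irrational_gaussMap_iterate hx n).ne_zero
    refine ⟨_, GenContFract.IntFractPair.stream_succ_of_some hp hne, ?_⟩
    rw [Function.iterate_succ_apply', ← hfr]
    rfl

theorem get?_of_s_eq_partialQuotient (hx : Irrational x) (hx01 : x ∈ Set.Ioo (0 : ℝ) 1) (n : ℕ) :
    (GenContFract.of x).s.get? n = some ⟨1, (partialQuotient x n : ℕ)⟩ := by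
  obtain ⟨p, hp, hfr⟩ := stream_eq_some_gaussMap_iterate hx hx01 n
  have hne : p.fr ≠ 0 := hfr ▸ (irrational_gaussMap_iterate hx n).ne_zero
  rw [GenContFract.get?_of_eq_some_of_get?_intFractPair_stream_fr_ne_zero hp hne, hfr,
    coe_partialQuotient hx hx01, natCast_floor_eq_intCast_floor
      (inv_nonneg.2 (gaussMap_iterate_mem_Ioo hx hx01 n).1.le)]
  rfl

theorem convs_eq_pnum_div_qden {K : Type*} [DivisionRing K] {g : GenContFract K} {a : ℕ → ℕ+}
    (hh : g.h = 0) (hs : ∀ n, g.s.get? n = some ⟨1, ((a n : ℕ) : K)⟩) (n : ℕ) :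
    g.convs n = (pnum a n : K) / qden a n := by
  suffices h : g.nums n = pnum a n ∧ g.dens n = qden a n by
    rw [GenContFract.conv_eq_num_div_den, h.1, h.2]
  induction n using Nat.strong_induction_on with
  | _ n ih =>
    match n with
    | 0 => simp [GenContFract.zeroth_num_eq_h, hh, pnum, qden]
    | 1 => simp [GenContFract.first_num_eq (hs 0), GenContFract.first_den_eq (hs 0), hh, pnum, qden]
    | n + 2 =>
      have hn := ih n (by omega)
      have hn' := ih (n + 1) (by omega)
      rw [GenContFract.nums_recurrence (hs (n + 1)) hn.1 hn'.1,
        GenContFract.dens_recurrence (hs (n + 1)) hn.2 hn'.2]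
      simp [pnum, qden]

theorem cfVal_partialQuotient (hx : Irrational x) (hx01 : x ∈ Set.Ioo (0 : ℝ) 1) :
    cfVal (partialQuotient x) = x := by
  have hh : (GenContFract.of x).h = 0 := by
    rw [GenContFract.of_h_eq_floor, Int.floor_eq_zero_iff.2 ⟨hx01.1.le, hx01.2⟩, Int.cast_zero]
  exact (GenContFract.of_convergence x).congr
    (convs_eq_pnum_div_qden hh (get?_of_s_eq_partialQuotient hx hx01)) |>.limUnder_eq

end GaussMap

section TransferWeights

/-- The `j`-th inverse branch of the Gauss map (indexed from `0`), mapping `(0, 1)` onto the points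
whose first partial quotient is `j + 1`. -/
noncomputable def gaussBranch (j : ℕ) (y : ℝ) : ℝ := (j + 1 + y)⁻¹

/-- The weight of the `j`-th branch in the transfer operator of the Gauss map with respect to the
Gauss measure: the probability that the first partial quotient is `j + 1` given that the Gauss map
takes the value `y`. -/
noncomputable def branchWeight (j : ℕ) (y : ℝ) : ℝ := (1 + y) / ((j + 1 + y) * (j + 2 + y))

theorem measurable_gaussBranch (j : ℕ) : Measurable (gaussBranch j) := by
  unfold gaussBranch; fun_prop

theorem measurable_branchWeight (j : ℕ) : Measurable (branchWeight j) := by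
  unfold branchWeight; fun_prop

variable {x y : ℝ}

theorem gaussBranch_mem_Ioo (j : ℕ) (hy : y ∈ Set.Ioo (0 : ℝ) 1) :
    gaussBranch j y ∈ Set.Ioo (0 : ℝ) 1 := by
  have hy0 := hy.1
  unfold gaussBranch
  exact ⟨by positivity, inv_lt_one_of_one_lt₀ (by linarith [j.cast_nonneg (α := ℝ)])⟩

theorem branchWeight_nonneg (j : ℕ) (hy : 0 ≤ y) : 0 ≤ branchWeight j y := by
  unfold branchWeight; positivity

theorem branchWeight_le (j : ℕ) (hy : y ∈ Set.Icc (0 : ℝ) 1) :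
    branchWeight j y ≤ 2 / ((j : ℝ) + 1) ^ 2 := by
  obtain ⟨hy0, hy1⟩ := hy
  unfold branchWeight
  rw [sq]
  gcongr ?_ / (?_ * ?_) <;> linarith

theorem hasSum_branchWeight (hy : 0 ≤ y) : HasSum (branchWeight · y) 1 := by
  rw [hasSum_iff_tendsto_nat_of_nonneg fun j => branchWeight_nonneg j hy]
  have hpartial (n : ℕ) : ∑ j ∈ range n, branchWeight j y = 1 - (1 + y) / (n + (1 + y)) := by
    induction n with
    | zero => field_simp; simp
    | succ n ih =>
      rw [sum_range_succ, ih, branchWeight]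
      push_cast
      field_simp
      ring
  simp_rw [hpartial]
  have hden : Tendsto (fun n : ℕ => (n : ℝ) + (1 + y)) atTop atTop :=
    tendsto_atTop_add_const_right _ _ tendsto_natCast_atTop_atTop
  simpa using (hden.const_div_atTop (1 + y)).const_sub 1

theorem branchWeight_sub (j : ℕ) (hx : 0 ≤ x) (hy : 0 ≤ y) :
    branchWeight j x - branchWeight j y = (x - y) * (j ^ 2 + j - 1 - x - y - x * y) /
      ((j + 1 + x) * (j + 2 + x) * ((j + 1 + y) * (j + 2 + y))) := by
  unfold branchWeight
  field_simp
  ring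

theorem abs_branchWeight_sub_le_mul {j : ℕ} {c : ℝ} (hx : 0 ≤ x) (hy : 0 ≤ y)
    (hc : |(j : ℝ) ^ 2 + j - 1 - x - y - x * y| ≤
      c * ((j + 1 + x) * (j + 2 + x) * ((j + 1 + y) * (j + 2 + y)))) :
    |branchWeight j x - branchWeight j y| ≤ c * |x - y| := by
  have hden : 0 < (j + 1 + x) * (j + 2 + x) * ((j + 1 + y) * (j + 2 + y)) := by positivity
  rw [branchWeight_sub j hx hy, abs_div, abs_mul, abs_of_pos hden, div_le_iff₀ hden]
  calc |x - y| * |(j : ℝ) ^ 2 + j - 1 - x - y - x * y|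
      ≤ |x - y| * (c * ((j + 1 + x) * (j + 2 + x) * ((j + 1 + y) * (j + 2 + y)))) := by gcongr
    _ = c * |x - y| * ((j + 1 + x) * (j + 2 + x) * ((j + 1 + y) * (j + 2 + y))) := by ring

theorem abs_branchWeight_sub_le (j : ℕ) (hx : x ∈ Set.Icc (0 : ℝ) 1) (hy : y ∈ Set.Icc (0 : ℝ) 1) :
    |branchWeight j x - branchWeight j y| ≤ 2 / ((j : ℝ) + 1) ^ 2 * |x - y| := by
  obtain ⟨⟨hx0, hx1⟩, hy0, hy1⟩ := And.intro hx hy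
  have hxy : 0 ≤ x * y := mul_nonneg hx0 hy0
  have hxy1 : x * y ≤ 1 := mul_le_one₀ hx1 hy0 hy1
  refine abs_branchWeight_sub_le_mul hx0 hy0 ?_
  calc |(j : ℝ) ^ 2 + j - 1 - x - y - x * y|
      ≤ 2 * ((j : ℝ) + 2) ^ 2 := by
        rw [abs_le]; constructor <;> nlinarith [j.cast_nonneg (α := ℝ)]
    _ = 2 / ((j : ℝ) + 1) ^ 2 * ((j + 1) * (j + 2) * ((j + 1) * (j + 2))) := by field_simp
    _ ≤ _ := by gcongr _ * (?_ * ?_ * (?_ * ?_)) <;> linarith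

theorem summable_abs_branchWeight_sub (hx : 0 ≤ x) (hy : 0 ≤ y) :
    Summable fun j => |branchWeight j x - branchWeight j y| :=
  ((hasSum_branchWeight hx).summable.sub (hasSum_branchWeight hy).summable).abs

theorem tsum_abs_branchWeight_sub_le (hx : x ∈ Set.Icc (0 : ℝ) 1) (hy : y ∈ Set.Icc (0 : ℝ) 1) :
    ∑' j, |branchWeight j x - branchWeight j y| ≤ 7 / 12 * |x - y| := by
  wlog hxy : y ≤ x generalizing x y
  · simpa only [abs_sub_comm] using this hy hx (le_of_not_ge hxy)
  obtain ⟨⟨hx0, hx1⟩, hy0, hy1⟩ := And.intro hx hy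
  set d : ℕ → ℝ := fun j => branchWeight j x - branchWeight j y with hd
  have hprod : x * y ≤ 1 := mul_le_one₀ hx1 hy0 hy1
  have hsum : HasSum d 0 := by simpa using (hasSum_branchWeight hx0).sub (hasSum_branchWeight hy0)
  have hd0 : |d 0| ≤ 1 / 4 * |x - y| := by
    refine abs_branchWeight_sub_le_mul hx0 hy0 ?_
    calc |((0 : ℕ) : ℝ) ^ 2 + (0 : ℕ) - 1 - x - y - x * y|
        = 1 / 4 * ((1 + x) * 2 * ((1 + y) * 2)) := by
          rw [← abs_neg, abs_of_nonneg] <;> push_cast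
          · ring
          · nlinarith [mul_nonneg hx0 hy0]
      _ ≤ _ := by push_cast; gcongr _ * (?_ * ?_ * (?_ * ?_)) <;> linarith
  have hd1 : |d 1| ≤ 1 / 24 * |x - y| := by
    refine abs_branchWeight_sub_le_mul hx0 hy0 ?_
    calc |((1 : ℕ) : ℝ) ^ 2 + (1 : ℕ) - 1 - x - y - x * y|
        ≤ 1 / 24 * (5 * (1 + x) * (5 * (1 + y))) := by
          rw [abs_le]; push_cast; constructor <;> nlinarith [mul_nonneg hx0 hy0]
      _ ≤ _ := by push_cast; gcongr _ * (?_ * ?_) <;> nlinarith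
  have htail (j : ℕ) : 0 ≤ d (j + 2) := by
    have hnum : 0 ≤ ((j + 2 : ℕ) : ℝ) ^ 2 + (j + 2 : ℕ) - 1 - x - y - x * y := by
      push_cast; nlinarith [j.cast_nonneg (α := ℝ)]
    simp only [hd, branchWeight_sub _ hx0 hy0]
    have := sub_nonneg.2 hxy
    positivity
  have htail_sum : ∑' j, d (j + 2) = -(d 0 + d 1) := by
    have := hsum.summable.sum_add_tsum_nat_add 2
    rw [hsum.tsum_eq, sum_range_succ, sum_range_one] at this
    linarith
  calc ∑' j, |d j| = |d 0| + |d 1| + ∑' j, |d (j + 2)| := by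
        rw [← hsum.summable.abs.sum_add_tsum_nat_add 2, sum_range_succ, sum_range_one]
    _ = |d 0| + |d 1| - (d 0 + d 1) := by
        simp_rw [abs_of_nonneg (htail _), htail_sum]; ring
    _ ≤ 7 / 12 * |x - y| := by
        linarith [neg_abs_le (d 0), neg_abs_le (d 1)]

theorem abs_gaussBranch_sub (j : ℕ) (hx : 0 ≤ x) (hy : 0 ≤ y) :
    |gaussBranch j x - gaussBranch j y| = |x - y| / ((j + 1 + x) * (j + 1 + y)) := by
  unfold gaussBranch
  have hden : 0 < (j + 1 + x) * (j + 1 + y) := by positivity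
  rw [inv_sub_inv (by positivity) (by positivity), abs_div, abs_of_pos hden,
    add_sub_add_left_eq_sub, abs_sub_comm]

theorem abs_gaussBranch_sub_le (j : ℕ) (hx : 0 ≤ x) (hy : 0 ≤ y) :
    |gaussBranch j x - gaussBranch j y| ≤ |x - y| := by
  have := j.cast_nonneg (α := ℝ)
  rw [abs_gaussBranch_sub j hx hy]
  exact div_le_self (abs_nonneg _)
    (one_le_mul_of_one_le_of_one_le (by linarith) (by linarith))

theorem summable_branchWeight_mul_abs_gaussBranch_sub (hx : 0 ≤ x) (hy : 0 ≤ y) :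
    Summable fun j => branchWeight j x * |gaussBranch j x - gaussBranch j y| :=
  .of_nonneg_of_le (fun j => mul_nonneg (branchWeight_nonneg j hx) (abs_nonneg _))
    (fun j => mul_le_mul_of_nonneg_left (abs_gaussBranch_sub_le j hx hy) (branchWeight_nonneg j hx))
    ((hasSum_branchWeight hx).summable.mul_right |x - y|)

theorem tsum_branchWeight_mul_abs_gaussBranch_sub_le (hx : 0 ≤ x) (hy : 0 ≤ y) :
    ∑' j, branchWeight j x * |gaussBranch j x - gaussBranch j y| ≤ 5 / 8 * |x - y| := by
  have hw := hasSum_branchWeight hx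
  have hw0 : branchWeight 0 x ≤ 1 / 2 := by
    rw [branchWeight, div_le_div_iff₀ (by positivity) (by norm_num)]
    push_cast
    nlinarith
  have hwtail : ∑' j, branchWeight (j + 1) x = 1 - branchWeight 0 x := by
    linarith [hw.tsum_eq, hw.summable.tsum_eq_zero_add]
  have hbranch (j : ℕ) : |gaussBranch (j + 1) x - gaussBranch (j + 1) y| ≤ |x - y| / 4 := by
    rw [abs_gaussBranch_sub _ hx hy]
    gcongr
    push_cast
    nlinarith [j.cast_nonneg (α := ℝ)]
  have hsum := summable_branchWeight_mul_abs_gaussBranch_sub hx hy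
  calc ∑' j, branchWeight j x * |gaussBranch j x - gaussBranch j y|
      = branchWeight 0 x * |gaussBranch 0 x - gaussBranch 0 y| +
        ∑' j, branchWeight (j + 1) x * |gaussBranch (j + 1) x - gaussBranch (j + 1) y| :=
        hsum.tsum_eq_zero_add
    _ ≤ branchWeight 0 x * |x - y| + ∑' j, branchWeight (j + 1) x * (|x - y| / 4) := by
        have hwsum := (summable_nat_add_iff 1).2 hw.summable
        exact add_le_add
          (mul_le_mul_of_nonneg_left (abs_gaussBranch_sub_le 0 hx hy) (branchWeight_nonneg 0 hx))
          (((summable_nat_add_iff 1).2 hsum).tsum_le_tsum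
            (fun j => mul_le_mul_of_nonneg_left (hbranch j) (branchWeight_nonneg _ hx))
            (hwsum.mul_right _))
    _ = (1 / 4 + 3 / 4 * branchWeight 0 x) * |x - y| := by
        rw [tsum_mul_right, hwtail]; ring
    _ ≤ 5 / 8 * |x - y| := by gcongr; linarith

end TransferWeights

section Contraction

/-- The transfer operator of the Gauss map with respect to the Gauss measure, i.e. the adjoint of
composition with the Gauss map. -/
noncomputable def gaussTransfer (h : ℝ → ℝ) (y : ℝ) : ℝ :=
  ∑' j, branchWeight j y * h (gaussBranch j y)

theorem abs_tsum_mul_sub_tsum_mul_le {ι : Type*} {w w' a a' : ι → ℝ} {s c r : ℝ}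
    (hw0 : ∀ i, 0 ≤ w i) (hw : HasSum w s) (hw' : HasSum w' s)
    (hww' : Summable fun i => |w i - w' i|) (hwa : Summable fun i => w i * a i)
    (hwa' : Summable fun i => w' i * a' i)
    (haa' : Summable fun i => w i * |a i - a' i|) (hr : ∀ i, |a' i - c| ≤ r) :
    |∑' i, w i * a i - ∑' i, w' i * a' i| ≤
      ∑' i, w i * |a i - a' i| + r * ∑' i, |w i - w' i| := by
  have hterm (i : ι) : ‖w i * (a i - a' i) + (w i - w' i) * (a' i - c)‖ ≤
      w i * |a i - a' i| + r * |w i - w' i| := calc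
    _ ≤ |w i * (a i - a' i)| + |(w i - w' i) * (a' i - c)| := abs_add_le _ _
    _ = w i * |a i - a' i| + |a' i - c| * |w i - w' i| := by
      rw [abs_mul, abs_mul, abs_of_nonneg (hw0 i), mul_comm |w i - w' i|]
    _ ≤ _ := by gcongr; exact hr i
  have hcenter : HasSum (fun i => (w i - w' i) * c) 0 := by
    simpa using (hw.sub hw').mul_right c
  have hdecomp : ∑' i, w i * a i - ∑' i, w' i * a' i =
      ∑' i, (w i * (a i - a' i) + (w i - w' i) * (a' i - c)) := by
    rw [← hwa.tsum_sub hwa', ← sub_zero (∑' i, _), ← hcenter.tsum_eq,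
      ← (hwa.sub hwa').tsum_sub hcenter.summable]
    exact tsum_congr fun i => by ring
  have hbound := haa'.add (hww'.mul_left r)
  rw [hdecomp, ← tsum_mul_left, ← haa'.tsum_add (hww'.mul_left r)]
  exact tsum_of_norm_bounded hbound.hasSum hterm

variable {h : ℝ → ℝ} {K : ℝ≥0}

theorem abs_sub_half_le_of_lipschitzOnWith (hh : LipschitzOnWith K h (Set.Ioo 0 1)) {y : ℝ}
    (hy : y ∈ Set.Ioo (0 : ℝ) 1) : |h y - h (1 / 2)| ≤ K / 2 := by
  have hdist : |y - 1 / 2| ≤ 1 / 2 := by rw [abs_le]; constructor <;> linarith [hy.1, hy.2]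
  calc |h y - h (1 / 2)| ≤ K * |y - 1 / 2| := hh.dist_le_mul y hy _ (by norm_num)
    _ ≤ K * (1 / 2) := by gcongr
    _ = K / 2 := by ring

theorem summable_branchWeight_mul (hh : LipschitzOnWith K h (Set.Ioo 0 1)) {y : ℝ}
    (hy : y ∈ Set.Ioo (0 : ℝ) 1) : Summable fun j => branchWeight j y * h (gaussBranch j y) := by
  refine .of_norm_bounded ((hasSum_branchWeight hy.1.le).summable.mul_right (K / 2 + |h (1 / 2)|))
    fun j => ?_
  have hw := branchWeight_nonneg j hy.1.le
  rw [norm_mul, Real.norm_of_nonneg hw, Real.norm_eq_abs]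
  gcongr
  linarith [abs_sub_half_le_of_lipschitzOnWith hh (gaussBranch_mem_Ioo j hy),
    abs_sub_abs_le_abs_sub (h (gaussBranch j y)) (h (1 / 2))]

theorem lipschitzOnWith_gaussTransfer (hh : LipschitzOnWith K h (Set.Ioo 0 1)) :
    LipschitzOnWith (11 / 12 * K) (gaussTransfer h) (Set.Ioo 0 1) := by
  refine .of_dist_le_mul fun x hx y hy => ?_
  obtain ⟨hx0, hy0⟩ := And.intro hx.1.le hy.1.le
  have hlip (j : ℕ) : branchWeight j x * |h (gaussBranch j x) - h (gaussBranch j y)| ≤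
      K * (branchWeight j x * |gaussBranch j x - gaussBranch j y|) := by
    rw [mul_left_comm]
    exact mul_le_mul_of_nonneg_left
      (hh.dist_le_mul _ (gaussBranch_mem_Ioo j hx) _ (gaussBranch_mem_Ioo j hy))
      (branchWeight_nonneg j hx0)
  have hbranch := (summable_branchWeight_mul_abs_gaussBranch_sub hx0 hy0).mul_left (K : ℝ)
  have hdiff : Summable fun j =>
      branchWeight j x * |h (gaussBranch j x) - h (gaussBranch j y)| :=
    .of_nonneg_of_le (fun j => mul_nonneg (branchWeight_nonneg j hx0) (abs_nonneg _)) hlip hbranch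
  calc |gaussTransfer h x - gaussTransfer h y|
      ≤ ∑' j, branchWeight j x * |h (gaussBranch j x) - h (gaussBranch j y)| +
          K / 2 * ∑' j, |branchWeight j x - branchWeight j y| :=
        abs_tsum_mul_sub_tsum_mul_le (fun j => branchWeight_nonneg j hx0) (hasSum_branchWeight hx0)
          (hasSum_branchWeight hy0) (summable_abs_branchWeight_sub hx0 hy0)
          (summable_branchWeight_mul hh hx) (summable_branchWeight_mul hh hy) hdiff
          fun j => abs_sub_half_le_of_lipschitzOnWith hh (gaussBranch_mem_Ioo j hy)
    _ ≤ K * (5 / 8 * |x - y|) + K / 2 * (7 / 12 * |x - y|) := by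
        gcongr
        · calc ∑' j, branchWeight j x * |h (gaussBranch j x) - h (gaussBranch j y)|
              ≤ K * ∑' j, branchWeight j x * |gaussBranch j x - gaussBranch j y| := by
                rw [← tsum_mul_left]; exact hdiff.tsum_le_tsum hlip hbranch
            _ ≤ K * (5 / 8 * |x - y|) := by
                gcongr; exact tsum_branchWeight_mul_abs_gaussBranch_sub_le hx0 hy0
        · exact tsum_abs_branchWeight_sub_le (Set.Ioo_subset_Icc_self hx)
            (Set.Ioo_subset_Icc_self hy)
    _ = (11 / 12 * K : ℝ≥0) * |x - y| := by push_cast; ring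

end Contraction

section GaussMeasure

/-- The density `1 / ((1 + x) log 2)` of the Gauss measure. -/
noncomputable def gaussDensity (x : ℝ) : ℝ≥0∞ := ENNReal.ofReal ((1 + x) * Real.log 2)⁻¹

/-- The Gauss measure, the invariant probability measure of the Gauss map, regarded as a measure
on `ℝ` concentrated on `(0, 1]`. -/
noncomputable def gaussMeasure : Measure ℝ :=
  (volume.restrict (Set.Ioc 0 1)).withDensity gaussDensity

/-- The set of the `x ∈ (0, 1]` whose first partial quotient is `j + 1`. -/
def gaussCylinder (j : ℕ) : Set ℝ := Set.Ioc ((j : ℝ) + 2)⁻¹ ((j : ℝ) + 1)⁻¹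

theorem measurable_gaussDensity : Measurable gaussDensity := by unfold gaussDensity; fun_prop

theorem ae_gaussMeasure_mem_Ioo : ∀ᵐ x ∂gaussMeasure, x ∈ Set.Ioo (0 : ℝ) 1 := by
  refine (withDensity_absolutelyContinuous _ gaussDensity).ae_le ?_
  rw [← restrict_Ioo_eq_restrict_Ioc]
  exact ae_restrict_mem measurableSet_Ioo

theorem gaussMeasure_restrict_Ioc : gaussMeasure.restrict (Set.Ioc 0 1) = gaussMeasure :=
  Measure.restrict_eq_self_of_ae_mem
    (ae_gaussMeasure_mem_Ioo.mono fun _ hx => Set.Ioo_subset_Ioc_self hx)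

theorem absolutelyContinuous_gaussMeasure : volume.restrict (Set.Ioc 0 1) ≪ gaussMeasure := by
  refine withDensity_absolutelyContinuous' measurable_gaussDensity.aemeasurable ?_
  filter_upwards [ae_restrict_mem measurableSet_Ioc] with x hx
  have := Real.log_pos one_lt_two
  have hx0 := hx.1
  exact (ENNReal.ofReal_pos.2 (by positivity)).ne'

theorem lintegral_gaussMeasure {F : ℝ → ℝ≥0∞} (hF : Measurable F) :
    ∫⁻ x, F x ∂gaussMeasure = ∫⁻ x in Set.Ioc 0 1, gaussDensity x * F x :=
  lintegral_withDensity_eq_lintegral_mul _ measurable_gaussDensity hF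

theorem setLIntegral_gaussMeasure {s : Set ℝ} (hs : MeasurableSet s) (hs01 : s ⊆ Set.Ioc 0 1)
    {F : ℝ → ℝ≥0∞} (hF : Measurable F) :
    ∫⁻ x in s, F x ∂gaussMeasure = ∫⁻ x in s, gaussDensity x * F x := by
  rw [gaussMeasure, setLIntegral_withDensity_eq_setLIntegral_mul _ measurable_gaussDensity hF hs,
    Measure.restrict_restrict hs, Set.inter_eq_left.2 hs01]
  rfl

theorem hasDerivAt_logb_one_add {x : ℝ} (hx : 0 ≤ x) :
    HasDerivAt (fun x => Real.logb 2 (1 + x)) ((1 + x) * Real.log 2)⁻¹ x := by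
  have hne : 1 + id x ≠ 0 := by rw [id]; positivity
  have hderiv := (((hasDerivAt_id x).const_add 1).log hne).div_const (Real.log 2)
  rwa [id, one_div, div_eq_mul_inv, ← mul_inv] at hderiv

theorem gaussMeasure_Ioc {a b : ℝ} (ha : 0 ≤ a) (hab : a ≤ b) (hb : b ≤ 1) :
    gaussMeasure (Set.Ioc a b) = ENNReal.ofReal (Real.logb 2 (1 + b) - Real.logb 2 (1 + a)) := by
  have := Real.log_pos one_lt_two
  have hcont : ContinuousOn (fun x : ℝ => ((1 + x) * Real.log 2)⁻¹) (Set.uIcc a b) := by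
    rw [Set.uIcc_of_le hab]
    refine .inv₀ (by fun_prop) fun x hx => ?_
    have := ha.trans hx.1
    positivity
  have hint := hcont.intervalIntegrable (μ := volume)
  have hnonneg : 0 ≤ᵐ[volume.restrict (Set.Ioc a b)] fun x => ((1 + x) * Real.log 2)⁻¹ := by
    filter_upwards [ae_restrict_mem measurableSet_Ioc] with x hx
    have := ha.trans hx.1.le
    simp only [Pi.zero_apply]
    positivity
  have hFTC := intervalIntegral.integral_eq_sub_of_hasDerivAt
    (fun x hx => hasDerivAt_logb_one_add (ha.trans (Set.uIcc_of_le hab ▸ hx).1)) hint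
  rw [← setLIntegral_one, setLIntegral_gaussMeasure measurableSet_Ioc (Set.Ioc_subset_Ioc ha hb)
    measurable_const, ← hFTC, intervalIntegral.integral_of_le hab]
  simp only [mul_one, gaussDensity]
  exact (ofReal_integral_eq_lintegral_ofReal
    ((intervalIntegrable_iff_integrableOn_Ioc_of_le hab).1 hint) hnonneg).symm

instance isProbabilityMeasure_gaussMeasure : IsProbabilityMeasure gaussMeasure where
  measure_univ := by
    rw [← gaussMeasure_restrict_Ioc, Measure.restrict_apply_univ,
      gaussMeasure_Ioc le_rfl zero_le_one le_rfl]
    norm_num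

theorem measurableSet_gaussCylinder (j : ℕ) : MeasurableSet (gaussCylinder j) := measurableSet_Ioc

theorem mem_gaussCylinder_iff {j : ℕ} {x : ℝ} :
    x ∈ gaussCylinder j ↔ 0 < x ∧ ⌊x⁻¹⌋₊ = j + 1 := by
  by_cases hx : 0 < x
  · rw [gaussCylinder, Set.mem_Ioc, Nat.floor_eq_iff (inv_nonneg.2 hx.le),
      inv_lt_comm₀ (by positivity) hx, ← le_inv_comm₀ (by positivity) hx]
    push_cast
    rw [add_assoc, one_add_one_eq_two]
    tauto
  · exact iff_of_false (fun h => hx ((by positivity : (0 : ℝ) < ((j : ℝ) + 2)⁻¹).trans h.1))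
      fun h => hx h.1

theorem iUnion_gaussCylinder : ⋃ j, gaussCylinder j = Set.Ioc (0 : ℝ) 1 := by
  ext x
  simp only [Set.mem_iUnion, mem_gaussCylinder_iff, exists_and_left, Set.mem_Ioc]
  refine and_congr_right fun hx => ?_
  rw [← one_le_inv₀ hx, ← Nat.one_le_floor_iff]
  exact ⟨fun ⟨j, hj⟩ => by omega, fun h => ⟨⌊x⁻¹⌋₊ - 1, by omega⟩⟩

theorem pairwise_disjoint_gaussCylinder : Pairwise (Function.onFun Disjoint gaussCylinder) := by
  refine fun i j hij => Set.disjoint_left.2 fun x hi hj => hij ?_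
  have := (mem_gaussCylinder_iff.1 hi).2.symm.trans (mem_gaussCylinder_iff.1 hj).2
  omega

theorem lintegral_eq_tsum_setLIntegral_gaussCylinder (F : ℝ → ℝ≥0∞) :
    ∫⁻ x, F x ∂gaussMeasure = ∑' j, ∫⁻ x in gaussCylinder j, F x ∂gaussMeasure := by
  rw [← lintegral_iUnion measurableSet_gaussCylinder pairwise_disjoint_gaussCylinder,
    iUnion_gaussCylinder, gaussMeasure_restrict_Ioc]

end GaussMeasure

section TransferOperator

theorem gaussBranch_image_Ico (j : ℕ) : gaussBranch j '' Set.Ico 0 1 = gaussCylinder j := by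
  ext x
  have hinv {y : ℝ} : gaussBranch j y = x ↔ y = x⁻¹ - (j + 1) := by
    rw [gaussBranch, inv_eq_iff_eq_inv, eq_sub_iff_add_eq, add_comm y]
  simp only [Set.mem_image, hinv, exists_eq_right, mem_gaussCylinder_iff]
  by_cases hx : 0 < x
  · rw [Nat.floor_eq_iff (inv_nonneg.2 hx.le), Set.mem_Ico, sub_nonneg, sub_lt_iff_lt_add']
    push_cast
    exact (and_iff_right hx).symm
  · have := inv_nonpos.2 (not_lt.1 hx)
    exact iff_of_false (fun h => by linarith [h.1, j.cast_nonneg (α := ℝ)]) fun h => hx h.1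

theorem gaussMap_gaussBranch (j : ℕ) {y : ℝ} (hy : y ∈ Set.Ico (0 : ℝ) 1) :
    gaussMap (gaussBranch j y) = y := by
  rw [gaussBranch, ← Nat.cast_add_one, gaussMap_inv_natCast_add _ hy]

theorem hasDerivAt_gaussBranch (j : ℕ) {y : ℝ} (hy : 0 ≤ y) :
    HasDerivAt (gaussBranch j) (-((j + 1 + y) ^ 2)⁻¹) y := by
  have hne : (j : ℝ) + 1 + id y ≠ 0 := by rw [id]; positivity
  have hderiv := ((hasDerivAt_id y).const_add ((j : ℝ) + 1)).inv hne
  rwa [neg_div, one_div] at hderiv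

theorem ofReal_mul_gaussDensity_gaussBranch (j : ℕ) {y : ℝ} (hy : 0 ≤ y) :
    ENNReal.ofReal ((j + 1 + y) ^ 2)⁻¹ * gaussDensity (gaussBranch j y) =
      gaussDensity y * ENNReal.ofReal (branchWeight j y) := by
  have := Real.log_pos one_lt_two
  rw [gaussDensity, gaussDensity, gaussBranch, branchWeight, ← ENNReal.ofReal_mul (by positivity),
    ← ENNReal.ofReal_mul (by positivity)]
  congr 1
  field_simp
  ring

theorem measurable_ofReal_branchWeight_mul (j : ℕ) {F : ℝ → ℝ≥0∞} (hF : Measurable F) :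
    Measurable fun y => ENNReal.ofReal (branchWeight j y) * F (gaussBranch j y) :=
  (measurable_branchWeight j).ennreal_ofReal.mul (hF.comp (measurable_gaussBranch j))

theorem setLIntegral_gaussCylinder (j : ℕ) {F : ℝ → ℝ≥0∞} (hF : Measurable F) :
    ∫⁻ x in gaussCylinder j, F x ∂gaussMeasure =
      ∫⁻ y, ENNReal.ofReal (branchWeight j y) * F (gaussBranch j y) ∂gaussMeasure := by
  have hderiv (y : ℝ) (hy : y ∈ Set.Ico (0 : ℝ) 1) :=
    (hasDerivAt_gaussBranch j hy.1).hasDerivWithinAt (s := Set.Ico 0 1)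
  have hinj : Set.InjOn (gaussBranch j) (Set.Ico 0 1) :=
    Set.LeftInvOn.injOn fun y hy => gaussMap_gaussBranch j hy
  rw [setLIntegral_gaussMeasure (measurableSet_gaussCylinder j)
      (iUnion_gaussCylinder ▸ Set.subset_iUnion gaussCylinder j) hF, ← gaussBranch_image_Ico,
    lintegral_image_eq_lintegral_abs_deriv_mul measurableSet_Ico hderiv hinj,
    lintegral_gaussMeasure (measurable_ofReal_branchWeight_mul j hF),
    ← restrict_Ico_eq_restrict_Ioc]
  refine setLIntegral_congr_fun measurableSet_Ico fun y hy => ?_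
  have hy0 := hy.1
  rw [abs_neg, abs_of_nonneg (by positivity), ← mul_assoc,
    ofReal_mul_gaussDensity_gaussBranch j hy0, mul_assoc]

theorem lintegral_eq_lintegral_tsum_branchWeight_mul {F : ℝ → ℝ≥0∞} (hF : Measurable F) :
    ∫⁻ x, F x ∂gaussMeasure =
      ∫⁻ y, ∑' j, ENNReal.ofReal (branchWeight j y) * F (gaussBranch j y) ∂gaussMeasure := by
  rw [lintegral_eq_tsum_setLIntegral_gaussCylinder,
    lintegral_tsum fun j => (measurable_ofReal_branchWeight_mul j hF).aemeasurable]
  exact tsum_congr fun j => setLIntegral_gaussCylinder j hF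

variable {h : ℝ → ℝ} {G : ℝ → ℝ≥0∞}

theorem measurable_gaussTransfer (hh : Measurable h) : Measurable (gaussTransfer h) :=
  .tsum fun j => (measurable_branchWeight j).mul (hh.comp (measurable_gaussBranch j))

theorem gaussTransfer_nonneg (h0 : ∀ y ∈ Set.Ioo (0 : ℝ) 1, 0 ≤ h y) {y : ℝ}
    (hy : y ∈ Set.Ioo (0 : ℝ) 1) : 0 ≤ gaussTransfer h y :=
  tsum_nonneg fun j => mul_nonneg (branchWeight_nonneg j hy.1.le) (h0 _ (gaussBranch_mem_Ioo j hy))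

theorem lintegral_mul_comp_gaussMap (hh : Measurable h) (h0 : ∀ y ∈ Set.Ioo (0 : ℝ) 1, 0 ≤ h y)
    (hsum : ∀ y ∈ Set.Ioo (0 : ℝ) 1, Summable fun j => branchWeight j y * h (gaussBranch j y))
    (hG : Measurable G) :
    ∫⁻ x, ENNReal.ofReal (h x) * G (gaussMap x) ∂gaussMeasure =
      ∫⁻ y, ENNReal.ofReal (gaussTransfer h y) * G y ∂gaussMeasure := by
  rw [lintegral_eq_lintegral_tsum_branchWeight_mul
    (F := fun x => ENNReal.ofReal (h x) * G (gaussMap x))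
    (hh.ennreal_ofReal.mul (hG.comp measurable_gaussMap))]
  refine lintegral_congr_ae ?_
  filter_upwards [ae_gaussMeasure_mem_Ioo] with y hy
  have hw (j : ℕ) := branchWeight_nonneg j hy.1.le
  rw [gaussTransfer, ENNReal.ofReal_tsum_of_nonneg
    (fun j => mul_nonneg (hw j) (h0 _ (gaussBranch_mem_Ioo j hy))) (hsum y hy),
    ← ENNReal.tsum_mul_right]
  refine tsum_congr fun j => ?_
  rw [ENNReal.ofReal_mul (hw j), gaussMap_gaussBranch j (Set.Ioo_subset_Ico_self hy), mul_assoc]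

theorem lintegral_gaussTransfer (hh : Measurable h) (h0 : ∀ y ∈ Set.Ioo (0 : ℝ) 1, 0 ≤ h y)
    (hsum : ∀ y ∈ Set.Ioo (0 : ℝ) 1, Summable fun j => branchWeight j y * h (gaussBranch j y)) :
    ∫⁻ y, ENNReal.ofReal (gaussTransfer h y) ∂gaussMeasure =
      ∫⁻ x, ENNReal.ofReal (h x) ∂gaussMeasure := by
  simpa using (lintegral_mul_comp_gaussMap hh h0 hsum (G := 1) measurable_one).symm

theorem measurePreserving_gaussMap : MeasurePreserving gaussMap gaussMeasure gaussMeasure := by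
  refine ⟨measurable_gaussMap, Measure.ext_of_lintegral _ fun G hG => ?_⟩
  rw [lintegral_map hG measurable_gaussMap, lintegral_eq_lintegral_tsum_branchWeight_mul
    (F := fun x => G (gaussMap x)) (hG.comp measurable_gaussMap)]
  refine lintegral_congr_ae ?_
  filter_upwards [ae_gaussMeasure_mem_Ioo] with y hy
  have hw := hasSum_branchWeight hy.1.le
  simp_rw [gaussMap_gaussBranch _ (Set.Ioo_subset_Ico_self hy)]
  rw [ENNReal.tsum_mul_right, ← ENNReal.ofReal_tsum_of_nonneg
    (fun j => branchWeight_nonneg j hy.1.le) hw.summable, hw.tsum_eq, ENNReal.ofReal_one, one_mul]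

theorem ofReal_le_lintegral_add {K : ℝ≥0} (hh : LipschitzOnWith K h (Set.Ioo 0 1)) {y : ℝ}
    (hy : y ∈ Set.Ioo (0 : ℝ) 1) :
    ENNReal.ofReal (h y) ≤ ∫⁻ x, ENNReal.ofReal (h x) ∂gaussMeasure + K := by
  calc ENNReal.ofReal (h y) = ∫⁻ _, ENNReal.ofReal (h y) ∂gaussMeasure := by simp
    _ ≤ ∫⁻ x, (ENNReal.ofReal (h x) + K) ∂gaussMeasure := by
      refine lintegral_mono_ae ?_
      filter_upwards [ae_gaussMeasure_mem_Ioo] with x hx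
      have hyx : |y - x| ≤ 1 := by rw [abs_le]; constructor <;> linarith [hx.1, hx.2, hy.1, hy.2]
      have hle : h y ≤ h x + K := by
        have hdist : |h y - h x| ≤ K * |y - x| := hh.dist_le_mul y hy x hx
        linarith [le_abs_self (h y - h x), mul_le_of_le_one_right K.coe_nonneg hyx]
      calc ENNReal.ofReal (h y) ≤ ENNReal.ofReal (h x + K) := ENNReal.ofReal_le_ofReal hle
        _ ≤ ENNReal.ofReal (h x) + K := by
          simpa using ENNReal.ofReal_add_le (p := h x) (q := (K : ℝ))
    _ = _ := by rw [lintegral_add_right _ measurable_const]; simp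

theorem lintegral_mul_comp_gaussMap_iterate_le {K : ℝ≥0} (hh : Measurable h)
    (h0 : ∀ y ∈ Set.Ioo (0 : ℝ) 1, 0 ≤ h y) (hLip : LipschitzOnWith K h (Set.Ioo 0 1))
    (hG : Measurable G) (n : ℕ) :
    ∫⁻ x, ENNReal.ofReal (h x) * G (gaussMap^[n] x) ∂gaussMeasure ≤
      (∫⁻ x, ENNReal.ofReal (h x) ∂gaussMeasure + (K * (11 / 12) ^ n : ℝ≥0)) *
        ∫⁻ x, G x ∂gaussMeasure := by
  induction n generalizing h K with
  | zero =>
    rw [← lintegral_const_mul _ hG]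
    refine lintegral_mono_ae ?_
    filter_upwards [ae_gaussMeasure_mem_Ioo] with y hy
    rw [pow_zero, mul_one]
    gcongr
    · exact ofReal_le_lintegral_add hLip hy
    · rfl
  | succ n ih =>
    have hsum (y : ℝ) (hy : y ∈ Set.Ioo (0 : ℝ) 1) := summable_branchWeight_mul hLip hy
    calc ∫⁻ x, ENNReal.ofReal (h x) * G (gaussMap^[n] (gaussMap x)) ∂gaussMeasure
        = ∫⁻ y, ENNReal.ofReal (gaussTransfer h y) * G (gaussMap^[n] y) ∂gaussMeasure :=
          lintegral_mul_comp_gaussMap hh h0 hsum (hG.comp (measurable_gaussMap.iterate n))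
      _ ≤ (∫⁻ x, ENNReal.ofReal (gaussTransfer h x) ∂gaussMeasure +
            (11 / 12 * K * (11 / 12) ^ n : ℝ≥0)) * ∫⁻ x, G x ∂gaussMeasure :=
          ih (measurable_gaussTransfer hh) (fun y hy => gaussTransfer_nonneg h0 hy)
            (lipschitzOnWith_gaussTransfer hLip)
      _ = _ := by
          rw [lintegral_gaussTransfer hh h0 hsum]
          rw [pow_succ', mul_left_comm, mul_assoc (11 / 12)]

theorem lintegral_mul_comp_gaussMap_iterate_succ_le {K : ℝ≥0} (hh : Measurable h)
    (h0 : ∀ y ∈ Set.Ioo (0 : ℝ) 1, 0 ≤ h y)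
    (hsum : ∀ y ∈ Set.Ioo (0 : ℝ) 1, Summable fun j => branchWeight j y * h (gaussBranch j y))
    (hLip : LipschitzOnWith K (gaussTransfer h) (Set.Ioo 0 1)) (hG : Measurable G) (n : ℕ) :
    ∫⁻ x, ENNReal.ofReal (h x) * G (gaussMap^[n + 1] x) ∂gaussMeasure ≤
      (∫⁻ x, ENNReal.ofReal (h x) ∂gaussMeasure + (K * (11 / 12) ^ n : ℝ≥0)) *
        ∫⁻ x, G x ∂gaussMeasure := by
  calc ∫⁻ x, ENNReal.ofReal (h x) * G (gaussMap^[n] (gaussMap x)) ∂gaussMeasure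
      = ∫⁻ y, ENNReal.ofReal (gaussTransfer h y) * G (gaussMap^[n] y) ∂gaussMeasure :=
        lintegral_mul_comp_gaussMap hh h0 hsum (hG.comp (measurable_gaussMap.iterate n))
    _ ≤ (∫⁻ y, ENNReal.ofReal (gaussTransfer h y) ∂gaussMeasure +
          (K * (11 / 12) ^ n : ℝ≥0)) * ∫⁻ x, G x ∂gaussMeasure :=
        lintegral_mul_comp_gaussMap_iterate_le (measurable_gaussTransfer hh)
          (fun _ hy => gaussTransfer_nonneg h0 hy) hLip hG n
    _ = _ := by rw [lintegral_gaussTransfer hh h0 hsum]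

theorem covariance_comp_gaussMap_iterate_le {K : ℝ≥0} (hh : Measurable h) (h0 : ∀ x, 0 ≤ h x)
    (hL2 : MemLp h 2 gaussMeasure)
    (hsum : ∀ y ∈ Set.Ioo (0 : ℝ) 1, Summable fun j => branchWeight j y * h (gaussBranch j y))
    (hLip : LipschitzOnWith K (gaussTransfer h) (Set.Ioo 0 1)) (n : ℕ) :
    cov[h, h ∘ gaussMap^[n + 1]; gaussMeasure] ≤
      (K : ℝ) * (11 / 12) ^ n * gaussMeasure[h] := by
  have hmp := measurePreserving_gaussMap.iterate (n + 1)
  have hlint : ∫⁻ x, ENNReal.ofReal (h x) ∂gaussMeasure = ENNReal.ofReal gaussMeasure[h] :=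
    (ofReal_integral_eq_lintegral_ofReal (hL2.integrable one_le_two) (.of_forall h0)).symm
  have hmean0 : 0 ≤ gaussMeasure[h] := integral_nonneg h0
  have hmean : gaussMeasure[h ∘ gaussMap^[n + 1]] = gaussMeasure[h] := by
    calc gaussMeasure[h ∘ gaussMap^[n + 1]]
        = ∫ x, h x ∂(gaussMeasure.map gaussMap^[n + 1]) :=
          (integral_map hmp.aemeasurable hh.aestronglyMeasurable).symm
      _ = gaussMeasure[h] := by rw [hmp.map_eq]
  have hprod : gaussMeasure[h * h ∘ gaussMap^[n + 1]] ≤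
      (gaussMeasure[h] + (K : ℝ) * (11 / 12) ^ n) * gaussMeasure[h] := by
    rw [← ENNReal.ofReal_le_ofReal_iff (by positivity), ofReal_integral_eq_lintegral_ofReal
      (hL2.integrable_mul (hL2.comp_measurePreserving hmp))
      (.of_forall fun x => mul_nonneg (h0 x) (h0 _))]
    calc ∫⁻ x, ENNReal.ofReal (h x * h (gaussMap^[n + 1] x)) ∂gaussMeasure
        = ∫⁻ x, ENNReal.ofReal (h x) * ENNReal.ofReal (h (gaussMap^[n + 1] x)) ∂gaussMeasure := by
          simp_rw [ENNReal.ofReal_mul (h0 _)]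
      _ ≤ (∫⁻ x, ENNReal.ofReal (h x) ∂gaussMeasure + (K * (11 / 12) ^ n : ℝ≥0)) *
            ∫⁻ x, ENNReal.ofReal (h x) ∂gaussMeasure :=
          lintegral_mul_comp_gaussMap_iterate_succ_le hh (fun y _ => h0 y) hsum hLip
            hh.ennreal_ofReal n
      _ = ENNReal.ofReal ((gaussMeasure[h] + (K : ℝ) * (11 / 12) ^ n) * gaussMeasure[h]) := by
          rw [hlint, ENNReal.ofReal_mul (by positivity), ENNReal.ofReal_add hmean0 (by positivity),
            ← ENNReal.ofReal_coe_nnreal]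
          push_cast
          rfl
  rw [ProbabilityTheory.covariance_eq_sub hL2 (hL2.comp_measurePreserving hmp), hmean]
  linarith

end TransferOperator

section Khinchin

/-- The weight `log₂ (1 + 1 / ((j + 1) (j + 3)))` of the Gauss–Kuzmin law, i.e. the Gauss measure
of the set of points with first partial quotient `j + 1`. -/
noncomputable def gaussKuzminWeight (j : ℕ) : ℝ :=
  Real.logb 2 (1 + 1 / (((j : ℝ) + 1) * ((j : ℝ) + 3)))

theorem gaussKuzminWeight_nonneg (j : ℕ) : 0 ≤ gaussKuzminWeight j :=
  Real.logb_nonneg one_lt_two (le_add_of_nonneg_right (by positivity))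

theorem gaussKuzminWeight_le (j : ℕ) : gaussKuzminWeight j ≤ 2 / ((j : ℝ) + 1) ^ 2 := by
  have hlog : 1 / 2 ≤ Real.log 2 := by linarith [Real.log_two_gt_d9]
  rw [gaussKuzminWeight, Real.logb, div_le_iff₀ (by linarith)]
  calc Real.log (1 + 1 / (((j : ℝ) + 1) * ((j : ℝ) + 3)))
      ≤ 1 / (((j : ℝ) + 1) * ((j : ℝ) + 3)) := by
        linarith [Real.log_le_sub_one_of_pos
          (by positivity : 0 < 1 + 1 / (((j : ℝ) + 1) * ((j : ℝ) + 3)))]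
    _ ≤ 1 / ((j : ℝ) + 1) ^ 2 := by rw [sq]; gcongr; norm_num
    _ = 2 / ((j : ℝ) + 1) ^ 2 * (1 / 2) := by ring
    _ ≤ 2 / ((j : ℝ) + 1) ^ 2 * Real.log 2 := by gcongr

theorem gaussMeasure_gaussCylinder (j : ℕ) :
    gaussMeasure (gaussCylinder j) = ENNReal.ofReal (gaussKuzminWeight j) := by
  have hle : ((j : ℝ) + 1)⁻¹ ≤ 1 := inv_le_one_of_one_le₀ (by simp)
  rw [gaussCylinder, gaussMeasure_Ioc (by positivity) (by gcongr; norm_num) hle, gaussKuzminWeight,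
    ← Real.logb_div (by positivity) (by positivity)]
  congr 2
  field_simp
  ring

theorem lintegral_comp_natFloor_inv (f : ℕ → ℝ≥0∞) :
    ∫⁻ x, f ⌊x⁻¹⌋₊ ∂gaussMeasure = ∑' j, f (j + 1) * ENNReal.ofReal (gaussKuzminWeight j) := by
  rw [lintegral_eq_tsum_setLIntegral_gaussCylinder]
  refine tsum_congr fun j => ?_
  rw [← gaussMeasure_gaussCylinder, ← setLIntegral_const]
  exact setLIntegral_congr_fun (measurableSet_gaussCylinder j) fun x hx => by
    rw [(mem_gaussCylinder_iff.1 hx).2]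

theorem measurable_comp_natFloor_inv {β : Type*} [MeasurableSpace β] (f : ℕ → β) :
    Measurable fun x : ℝ => f ⌊x⁻¹⌋₊ :=
  measurable_from_nat.comp (Nat.measurable_floor.comp measurable_inv)

variable {f : ℕ → ℝ}

theorem lintegral_ofReal_comp_natFloor_inv (hf0 : ∀ n, 0 ≤ f n)
    (hf : Summable fun j => f (j + 1) * gaussKuzminWeight j) :
    ∫⁻ x, ENNReal.ofReal (f ⌊x⁻¹⌋₊) ∂gaussMeasure =
      ENNReal.ofReal (∑' j, f (j + 1) * gaussKuzminWeight j) := by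
  rw [lintegral_comp_natFloor_inv fun n => ENNReal.ofReal (f n), ENNReal.ofReal_tsum_of_nonneg
    (fun j => mul_nonneg (hf0 _) (gaussKuzminWeight_nonneg j)) hf]
  exact tsum_congr fun j => (ENNReal.ofReal_mul (hf0 _)).symm

theorem integrable_comp_natFloor_inv (hf0 : ∀ n, 0 ≤ f n)
    (hf : Summable fun j => f (j + 1) * gaussKuzminWeight j) :
    Integrable (fun x => f ⌊x⁻¹⌋₊) gaussMeasure := by
  refine (lintegral_ofReal_ne_top_iff_integrable
    (measurable_comp_natFloor_inv f).aestronglyMeasurable (.of_forall fun x => hf0 _)).1 ?_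
  rw [lintegral_ofReal_comp_natFloor_inv hf0 hf]
  exact ENNReal.ofReal_ne_top

theorem integral_comp_natFloor_inv (hf0 : ∀ n, 0 ≤ f n)
    (hf : Summable fun j => f (j + 1) * gaussKuzminWeight j) :
    ∫ x, f ⌊x⁻¹⌋₊ ∂gaussMeasure = ∑' j, f (j + 1) * gaussKuzminWeight j := by
  rw [integral_eq_lintegral_of_nonneg_ae (.of_forall fun x => hf0 _)
    (measurable_comp_natFloor_inv f).aestronglyMeasurable,
    lintegral_ofReal_comp_natFloor_inv hf0 hf, ENNReal.toReal_ofReal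
      (tsum_nonneg fun j => mul_nonneg (hf0 _) (gaussKuzminWeight_nonneg j))]

theorem natFloor_inv_gaussBranch (j : ℕ) {y : ℝ} (hy : y ∈ Set.Ico (0 : ℝ) 1) :
    ⌊(gaussBranch j y)⁻¹⌋₊ = j + 1 :=
  (mem_gaussCylinder_iff.1 (gaussBranch_image_Ico j ▸ Set.mem_image_of_mem _ hy)).2

theorem summable_mul_of_le_two_div_sq (hf0 : ∀ n, 0 ≤ f n)
    (hf : Summable fun n : ℕ => f n / n ^ 2) {w : ℕ → ℝ} (hw0 : ∀ j, 0 ≤ w j)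
    (hw : ∀ j : ℕ, w j ≤ 2 / ((j : ℝ) + 1) ^ 2) : Summable fun j => f (j + 1) * w j := by
  refine .of_nonneg_of_le (fun j => mul_nonneg (hf0 _) (hw0 j)) (fun j => ?_)
    (((summable_nat_add_iff 1).2 hf).mul_left 2)
  calc f (j + 1) * w j ≤ f (j + 1) * (2 / ((j : ℝ) + 1) ^ 2) := by gcongr; exacts [hf0 _, hw j]
    _ = 2 * (f (j + 1) / ((j + 1 : ℕ) : ℝ) ^ 2) := by push_cast; ring

theorem summable_div_sq_of_summable_sq_div_sq (hf0 : ∀ n, 0 ≤ f n)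
    (hf : Summable fun n : ℕ => f n ^ 2 / n ^ 2) : Summable fun n : ℕ => f n / n ^ 2 := by
  refine .of_nonneg_of_le (fun n => div_nonneg (hf0 n) (sq_nonneg _)) (fun n => ?_)
    ((Real.summable_one_div_nat_pow.2 one_lt_two).add hf)
  rw [← add_div]
  gcongr
  nlinarith [sq_nonneg (f n - 1), hf0 n]

theorem summable_branchWeight_mul_comp_natFloor_inv (hf0 : ∀ n, 0 ≤ f n)
    (hf : Summable fun n : ℕ => f n / n ^ 2) {y : ℝ} (hy : y ∈ Set.Ioo (0 : ℝ) 1) :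
    Summable fun j => branchWeight j y * f ⌊(gaussBranch j y)⁻¹⌋₊ := by
  simp_rw [natFloor_inv_gaussBranch _ (Set.Ioo_subset_Ico_self hy), mul_comm (branchWeight _ y)]
  exact summable_mul_of_le_two_div_sq hf0 hf (fun j => branchWeight_nonneg j hy.1.le)
    fun j => branchWeight_le j (Set.Ioo_subset_Icc_self hy)

theorem exists_lipschitzOnWith_gaussTransfer_comp_natFloor_inv (hf0 : ∀ n, 0 ≤ f n)
    (hf : Summable fun n : ℕ => f n / n ^ 2) :
    ∃ K, LipschitzOnWith K (gaussTransfer fun x => f ⌊x⁻¹⌋₊) (Set.Ioo 0 1) := by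
  have hC := summable_mul_of_le_two_div_sq hf0 hf
    (w := fun j : ℕ => 2 / ((j : ℝ) + 1) ^ 2) (fun j => by positivity) fun j => le_rfl
  have hC0 : 0 ≤ ∑' j : ℕ, f (j + 1) * (2 / ((j : ℝ) + 1) ^ 2) :=
    tsum_nonneg fun j => mul_nonneg (hf0 _) (by positivity)
  have htransfer {y : ℝ} (hy : y ∈ Set.Ioo (0 : ℝ) 1) :
      HasSum (fun j => f (j + 1) * branchWeight j y) (gaussTransfer (fun x => f ⌊x⁻¹⌋₊) y) := by
    simpa only [gaussTransfer, natFloor_inv_gaussBranch _ (Set.Ioo_subset_Ico_self hy),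
      mul_comm (branchWeight _ y)] using
      (summable_branchWeight_mul_comp_natFloor_inv hf0 hf hy).hasSum
  refine ⟨⟨_, hC0⟩, .of_dist_le_mul fun x hx y hy => ?_⟩
  refine ((htransfer hx).sub (htransfer hy)).norm_le_of_bounded
    (hC.hasSum.mul_right (dist x y)) fun j => ?_
  rw [← mul_sub, norm_mul, Real.norm_of_nonneg (hf0 _), mul_assoc]
  gcongr
  · exact hf0 _
  · exact abs_branchWeight_sub_le j (Set.Ioo_subset_Icc_self hx) (Set.Ioo_subset_Icc_self hy)

theorem ae_gaussMeasure_tendsto_sum_range_comp_natFloor_inv_div (hf0 : ∀ n, 0 ≤ f n)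
    (hf : Summable fun n : ℕ => f n ^ 2 / n ^ 2) {φ : ℕ → ℕ} (hφ : StrictMono φ) :
    ∀ᵐ x ∂gaussMeasure, Tendsto
      (fun n : ℕ => (∑ i ∈ range n, f ⌊(gaussMap^[φ i] x)⁻¹⌋₊) / n) atTop
      (𝓝 (∑' j, f (j + 1) * gaussKuzminWeight j)) := by
  have hf1 := summable_div_sq_of_summable_sq_div_sq hf0 hf
  set F : ℝ → ℝ := fun x => f ⌊x⁻¹⌋₊
  have hF0 (x : ℝ) : 0 ≤ F x := hf0 _
  have hFmeas : Measurable F := measurable_comp_natFloor_inv f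
  have hF2 : MemLp F 2 gaussMeasure := (memLp_two_iff_integrable_sq
    hFmeas.aestronglyMeasurable).2 <| integrable_comp_natFloor_inv (f := fun n => f n ^ 2)
      (fun n => sq_nonneg _) <| summable_mul_of_le_two_div_sq (fun n => sq_nonneg _) hf
        gaussKuzminWeight_nonneg gaussKuzminWeight_le
  obtain ⟨K, hK⟩ := exists_lipschitzOnWith_gaussTransfer_comp_natFloor_inv hf0 hf1
  have hmean : gaussMeasure[F] = ∑' j, f (j + 1) * gaussKuzminWeight j :=
    integral_comp_natFloor_inv hf0 <| summable_mul_of_le_two_div_sq hf0 hf1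
      gaussKuzminWeight_nonneg gaussKuzminWeight_le
  rw [← hmean]
  have hmean0 : 0 ≤ gaussMeasure[F] := integral_nonneg hF0
  refine ae_tendsto_sum_range_iterate_div measurePreserving_gaussMap hF0 hF2
    (r := fun n => (K : ℝ) * (11 / 12) ^ n * gaussMeasure[F]) ?_ (fun n => by positivity) ?_
    (covariance_comp_gaussMap_iterate_le hFmeas hF0 hF2
      (fun y hy => summable_branchWeight_mul_comp_natFloor_inv hf0 hf1 hy) hK) hφ
  · intro m n hmn
    have := pow_le_pow_of_le_one (by norm_num) (by norm_num : (11 : ℝ) / 12 ≤ 1) hmn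
    simp only
    gcongr
  · exact ((summable_geometric_of_lt_one (by norm_num) (by norm_num)).mul_left _).mul_right _

theorem ae_tendsto_sum_range_partialQuotient_div (hf0 : ∀ n, 0 ≤ f n)
    (hf : Summable fun n : ℕ => f n ^ 2 / n ^ 2) {φ : ℕ → ℕ} (hφ : StrictMono φ) :
    ∀ᵐ x : ℝ, Irrational x → x ∈ Set.Ioo (0 : ℝ) 1 → Tendsto
      (fun n : ℕ => (∑ i ∈ range n, f (partialQuotient x (φ i))) / n) atTop
      (𝓝 (∑' j, f (j + 1) * gaussKuzminWeight j)) := by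
  have hae := (ae_restrict_iff' measurableSet_Ioc).1 <| absolutelyContinuous_gaussMeasure.ae_le <|
    ae_gaussMeasure_tendsto_sum_range_comp_natFloor_inv_div hf0 hf hφ
  filter_upwards [hae] with x hx hirr hx01
  simpa only [coe_partialQuotient hirr hx01] using hx (Set.Ioo_subset_Ioc_self hx01)

end Khinchin

section KhinchinConstants

theorem summable_sq_log_natCast_add_div_sq (k : ℕ) :
    Summable fun n : ℕ => Real.log ((n : ℝ) + k) ^ 2 / (n : ℝ) ^ 2 := by
  refine .of_nonneg_of_le (fun n => by positivity) (fun n => ?_)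
    ((Real.summable_one_div_nat_rpow.2 (by norm_num : (1 : ℝ) < 3 / 2)).mul_left
      (16 * ((k : ℝ) + 1) ^ (1 / 2 : ℝ)))
  rcases n.eq_zero_or_pos with rfl | hn
  · simp
  have hn1 : (1 : ℝ) ≤ n := by exact_mod_cast hn
  have hlog : Real.log ((n : ℝ) + k) ≤ 4 * ((n : ℝ) + k) ^ (1 / 4 : ℝ) := by
    linarith [Real.log_le_rpow_div (by positivity : 0 ≤ (n : ℝ) + k)
      (by norm_num : (0 : ℝ) < 1 / 4)]
  have hlog_sq : Real.log ((n : ℝ) + k) ^ 2 ≤ 16 * ((n : ℝ) + k) ^ (1 / 2 : ℝ) := calc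
    _ ≤ (4 * ((n : ℝ) + k) ^ (1 / 4 : ℝ)) ^ 2 := by
      gcongr; exact Real.log_nonneg (by linarith [k.cast_nonneg (α := ℝ)])
    _ = _ := by
      rw [mul_pow, ← Real.rpow_mul_natCast (by positivity)]; norm_num
  calc Real.log ((n : ℝ) + k) ^ 2 / (n : ℝ) ^ 2
      ≤ 16 * (((k : ℝ) + 1) * n) ^ (1 / 2 : ℝ) / (n : ℝ) ^ 2 := by
        grw [hlog_sq]
        gcongr
        nlinarith [k.cast_nonneg (α := ℝ)]
    _ = 16 * ((k : ℝ) + 1) ^ (1 / 2 : ℝ) * (1 / (n : ℝ) ^ (3 / 2 : ℝ)) := by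
        have hpow : (n : ℝ) ^ 2 = (n : ℝ) ^ (1 / 2 : ℝ) * (n : ℝ) ^ (3 / 2 : ℝ) := by
          rw [← Real.rpow_add (by positivity)]; norm_num
        rw [Real.mul_rpow (by positivity) (by positivity), hpow]
        field_simp

theorem log_Kconst (k : ℕ) :
    Real.log (Kconst k) = ∑' j : ℕ, Real.log (((j + 1 : ℕ) : ℝ) + k) * gaussKuzminWeight j := by
  have hlog0 (n : ℕ) : 0 ≤ Real.log ((n : ℝ) + k) := by
    exact_mod_cast Real.log_natCast_nonneg (n + k)
  have hsum := summable_mul_of_le_two_div_sq hlog0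
    (summable_div_sq_of_summable_sq_div_sq hlog0 (summable_sq_log_natCast_add_div_sq k))
    gaussKuzminWeight_nonneg gaussKuzminWeight_le
  rw [← Real.log_exp (∑' j : ℕ, _), ← hsum.hasSum.rexp.tprod_eq, Kconst]
  congr 1
  refine tprod_congr fun j => ?_
  rw [Function.comp_apply, Real.rpow_def_of_pos (by positivity), gaussKuzminWeight, Real.logb]
  push_cast
  ring_nf

end KhinchinConstants

/-- Ergodic-type theorem: for every integer `k ≥ 0` and Lebesgue-almost every
`x ∈ (0,1)`, `x` is irrational with partial quotients `a` (0-indexed: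
`a j = a_{j+1}(x)`, so `a_{2j} = a (2j-1)` and `a_{2j-1} = a (2j-2)`), and the averages
`(1/n) ∑_{j=1}^n log(a_j+k)`, `(1/n) ∑_{j=1}^n log(a_{2j}+k)` and
`(1/n) ∑_{j=1}^n log(a_{2j-1}+k)` all converge to `log K_k`. -/
theorem avg_log_coeff_tendsto (k : ℕ) :
    ∀ᵐ x : ℝ, x ∈ Set.Ioo (0:ℝ) 1 →
      Irrational x ∧
      ∃ a : ℕ → ℕ+, cfVal a = x ∧
        Tendsto (fun n : ℕ => (1 / (n:ℝ)) * ∑ j ∈ Finset.range n,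
            Real.log ((a j : ℝ) + (k:ℝ))) atTop (nhds (Real.log (Kconst k))) ∧
        Tendsto (fun n : ℕ => (1 / (n:ℝ)) * ∑ j ∈ Finset.range n,
            Real.log ((a (2*j+1) : ℝ) + (k:ℝ))) atTop (nhds (Real.log (Kconst k))) ∧
        Tendsto (fun n : ℕ => (1 / (n:ℝ)) * ∑ j ∈ Finset.range n,
            Real.log ((a (2*j) : ℝ) + (k:ℝ))) atTop (nhds (Real.log (Kconst k))) := by
  have hlog0 (n : ℕ) : 0 ≤ Real.log ((n : ℝ) + k) := by
    exact_mod_cast Real.log_natCast_nonneg (n + k)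
  have hlimit {φ : ℕ → ℕ} (hφ : StrictMono φ) := ae_tendsto_sum_range_partialQuotient_div hlog0
    (summable_sq_log_natCast_add_div_sq k) hφ
  have hirr : ∀ᵐ x : ℝ, x ∉ Set.range ((↑) : ℚ → ℝ) := (Set.countable_range _).ae_notMem _
  filter_upwards [hirr, hlimit strictMono_id, hlimit (φ := fun j => 2 * j + 1) fun i j h => by lia,
    hlimit (φ := fun j => 2 * j) fun i j h => by lia] with x hx hall hodd heven hx01
  refine ⟨hx, partialQuotient x, cfVal_partialQuotient hx hx01, ?_⟩
  simp_rw [one_div_mul_eq_div, log_Kconst]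
  exact ⟨hall hx hx01, hodd hx hx01, heven hx hx01⟩
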